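/- arXiv:2407.01845 — 3 statements merged into one kernel-verified Lean document; each statement's English description precedes it below -/
import Mathlib

section
/- Let k be a field, let H and T be finite-dimensional k-vector spaces, let n ≥ 1 be an integer, and let u_1, …, u_n ∈ H, w_1, …, w_n ∈ T be vectors and c_1, …, c_n ∈ k scalars, not all zero, such that ∑_{i=1}^n c_i (u_i ⊗ w_i) = 0 in H ⊗_k T. Then the set D = {i : c_i ≠ 0} is nonempty and satisfies dim_k span{u_i : i ∈ D} + dim_k span{w_i : i ∈ D} ≤ |D|. -/
/-!
A functional `φ` on `T`, applied to the second tensor factor, turns `∑ uᵢ ⊗ wᵢ = 0` into the linear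
relation `∑ φ(wᵢ) uᵢ = 0`. As `φ` varies, the coefficient vectors `(φ(wᵢ))ᵢ` fill a space of
dimension `dim span{wᵢ}`, inside the space of relations among the `uᵢ`, which has dimension
`|ι| - dim span{uᵢ}`.
-/

open Module Submodule TensorProduct

section Semiring

variable {ι R M : Type*} [AddCommMonoid M]

theorem span_range_smul_of_isUnit [Semiring R] [Module R M] {c : ι → R} (hc : ∀ i, IsUnit (c i))
    (v : ι → M) : span R (Set.range fun i ↦ c i • v i) = span R (Set.range v) := by
  simp only [span_range_eq_iSup, span_singleton_smul_eq (hc _)]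

theorem sum_dual_apply_smul_eq_zero_of_sum_tmul_eq_zero {N : Type*} [CommSemiring R]
    [AddCommMonoid N] [Module R M] [Module R N] {s : Finset ι} {u : ι → M} {w : ι → N}
    (h : ∑ i ∈ s, u i ⊗ₜ[R] w i = 0) (φ : Dual R N) : ∑ i ∈ s, φ (w i) • u i = 0 := by
  simpa using congrArg (TensorProduct.rid R M ∘ φ.lTensor M) h

theorem ker_pi_dual_eval [CommSemiring R] [Module R M] (v : ι → M) :
    (LinearMap.pi fun i ↦ Dual.eval R M (v i)).ker =
      (span R (Set.range v)).dualAnnihilator := by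
  ext φ
  rw [← SetLike.mem_coe (p := dualAnnihilator _), coe_dualAnnihilator_span]
  simp [funext_iff, Set.range_subset_iff]

end Semiring

section Field

variable {ι k H T : Type*} [Field k] [AddCommGroup H] [AddCommGroup T] [Module k H] [Module k T]

theorem finrank_range_pi_dual_eval (w : ι → T) :
    finrank k (LinearMap.pi fun i ↦ Dual.eval k T (w i)).range =
      finrank k (span k (Set.range w)) := by
  set W := span k (Set.range w)
  calc finrank k (LinearMap.pi fun i ↦ Dual.eval k T (w i)).range
    _ = finrank k (Dual k T ⧸ (LinearMap.pi fun i ↦ Dual.eval k T (w i)).ker) :=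
      (LinearMap.quotKerEquivRange _).finrank_eq.symm
    _ = finrank k (Dual k T ⧸ W.dualAnnihilator) := by rw [ker_pi_dual_eval]
    _ = finrank k (Dual k W) := (Subspace.quotAnnihilatorEquiv W).finrank_eq
    _ = finrank k W := Subspace.dual_finrank_eq

theorem finrank_span_range_add_finrank_span_range_le_card_of_sum_tmul_eq_zero [Fintype ι]
    {u : ι → H} {w : ι → T} (h : ∑ i, u i ⊗ₜ[k] w i = 0) :
    finrank k (span k (Set.range u)) + finrank k (span k (Set.range w)) ≤ Fintype.card ι := by
  set relations := (Fintype.linearCombination k u).ker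
  have eval_le_relations : (LinearMap.pi fun i ↦ Dual.eval k T (w i)).range ≤ relations := by
    rintro _ ⟨φ, rfl⟩
    exact sum_dual_apply_smul_eq_zero_of_sum_tmul_eq_zero h φ
  calc finrank k (span k (Set.range u)) + finrank k (span k (Set.range w))
    _ ≤ finrank k (span k (Set.range u)) + finrank k relations := by
      rw [← finrank_range_pi_dual_eval w]
      gcongr
      exact Submodule.finrank_mono eval_le_relations
    _ = Fintype.card ι := by
      rw [← Fintype.range_linearCombination, LinearMap.finrank_range_add_finrank_ker,
        finrank_fintype_fun_eq_card]

theorem finrank_span_add_finrank_span_le_card_of_sum_smul_tmul_eq_zero_general [Fintype ι]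
    (u : ι → H) (w : ι → T) (c : ι → k) (hc : ∃ i, c i ≠ 0)
    (hsum : ∑ i, c i • (u i ⊗ₜ[k] w i) = 0) (D : Finset ι) (hD : ∀ i, i ∈ D ↔ c i ≠ 0) :
    D.Nonempty ∧
      finrank k (span k (u '' (D : Set ι))) + finrank k (span k (w '' (D : Set ι))) ≤ D.card := by
  refine ⟨hc.imp fun i ↦ (hD i).2, ?_⟩
  have sum_support : ∑ i : D, u i ⊗ₜ[k] (c i • w i) = 0 := by
    simp only [tmul_smul]
    rw [Finset.sum_coe_sort D fun i ↦ c i • (u i ⊗ₜ[k] w i), ← hsum]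
    refine Finset.sum_subset D.subset_univ fun i _ hi ↦ ?_
    rw [not_not.1 (mt (hD i).2 hi), zero_smul]
  have span_w : span k (Set.range fun i : D ↦ c i • w i) = span k (w '' (D : Set ι)) := by
    rw [span_range_smul_of_isUnit fun i : D ↦ ((hD i).1 i.2).isUnit, Set.image_eq_range]
    rfl
  rw [← span_w, Set.image_eq_range, ← Fintype.card_coe]
  exact finrank_span_range_add_finrank_span_range_le_card_of_sum_tmul_eq_zero sum_support

end Field

/-- If `H`, `T` are finite-dimensional vector spaces over a field `k`, `n ≥ 1`,
`u₁, …, uₙ ∈ H`, `w₁, …, wₙ ∈ T` and scalars `c₁, …, cₙ ∈ k`, not all zero, satisfy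
`∑ cᵢ (uᵢ ⊗ wᵢ) = 0` in `H ⊗[k] T`, then `D = {i : cᵢ ≠ 0}` is nonempty and
`dim span{uᵢ : i ∈ D} + dim span{wᵢ : i ∈ D} ≤ |D|`. -/
theorem finrank_span_add_finrank_span_le_card_of_sum_smul_tmul_eq_zero
    (k : Type*) [Field k]
    (H T : Type*) [AddCommGroup H] [Module k H] [AddCommGroup T] [Module k T]
    [FiniteDimensional k H] [FiniteDimensional k T]
    (n : ℕ) (hn : 1 ≤ n)
    (u : Fin n → H) (w : Fin n → T) (c : Fin n → k)
    (hc : ∃ i, c i ≠ 0)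
    (hsum : (∑ i : Fin n, c i • (u i ⊗ₜ[k] w i)) = (0 : TensorProduct k H T))
    (D : Finset (Fin n)) (hD : ∀ i, i ∈ D ↔ c i ≠ 0) :
    D.Nonempty ∧
      Module.finrank k (Submodule.span k (u '' (D : Set (Fin n)))) +
        Module.finrank k (Submodule.span k (w '' (D : Set (Fin n)))) ≤ D.card :=
  finrank_span_add_finrank_span_le_card_of_sum_smul_tmul_eq_zero_general u w c hc hsum D hD
end

section
/- Let k be a field and let l ≥ 1 be an integer. Let R be the quotient of the polynomial ring k[x, y, t] in three variables by the principal ideal generated by x·y − t^{l+1}, let m₀ be the maximal ideal of R generated by the images of x, y, and t, and let R_{m₀} be the localization of R at m₀, with maximal ideal 𝔪. Then the cotangent space 𝔪/𝔪², as a vector space over the residue field k, has dimension exactly 3. -/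
/-! A commutative ring `R` with a ring homomorphism `φ` to a trivial square-zero extension `K ⊕ V`
gives a test for linear independence in `I/I²`, where `I = φ⁻¹(V)`: as `V² = 0`, `φ` kills `I²`, so
linear independence of the `V`-components of elements of `I` forces that of their classes in `I/I²`.

For a polynomial ring, take for `φ` the first-order Taylor expansion at the origin, which sends the
variables to a basis of `V`. It kills the square of the ideal of the origin, so it descends to the
quotient by any ideal contained in that square, such as `(xy - t^{l+1})` with `l ≥ 1`, and further
to the local ring at the origin. Hence the variables form a basis of the cotangent space. -/

open IsLocalRing TrivSqZeroExt

theorem map_eq_zero_of_mem_sq_of_le_comap_kerIdeal {R K V : Type*} [CommSemiring R]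
    [CommSemiring K] [AddCommMonoid V] [Module K V] [Module Kᵐᵒᵖ V] [IsCentralScalar K V]
    {φ : R →+* TrivSqZeroExt K V} {I : Ideal R} (hφ : I ≤ (kerIdeal K V).comap φ) {r : R}
    (hr : r ∈ I ^ 2) : φ r = 0 := by
  have h : φ r ∈ kerIdeal K V ^ 2 := Ideal.le_comap_pow φ 2 (Ideal.pow_right_mono hφ 2 hr)
  rwa [kerIdeal_sq, Ideal.mem_bot] at h

section Cotangent

variable {R ι : Type*} [CommRing R] {I : Ideal R} {a : ι → I}

theorem span_range_toCotangent_eq_top (ha : Ideal.span (Set.range fun i => (a i : R)) = I) :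
    Submodule.span (R ⧸ I) (Set.range fun i => I.toCotangent (a i)) = ⊤ := by
  have span_a : Submodule.span R (Set.range a) = ⊤ := by
    apply Submodule.map_injective_of_injective I.subtype_injective
    rw [Submodule.map_span, Submodule.map_top, Submodule.range_subtype, ← Set.range_comp]
    exact ha
  apply Submodule.restrictScalars_injective R
  rw [Submodule.restrictScalars_span R (R ⧸ I) Ideal.Quotient.mk_surjective,
    Set.range_comp' I.toCotangent a, ← Submodule.map_span, span_a, Submodule.map_top,
    Ideal.toCotangent_range, Submodule.restrictScalars_top]

variable {K V : Type*} [CommRing K] [AddCommGroup V] [Module K V] [Module Kᵐᵒᵖ V]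
  [IsCentralScalar K V] {φ : R →+* TrivSqZeroExt K V} {v : ι → V}

theorem linearIndependent_toCotangent_of_trivSqZeroExt (hφ : (kerIdeal K V).comap φ = I)
    (hv : LinearIndependent K v) (ha : ∀ i, φ (a i) = inr (v i)) :
    LinearIndependent (R ⧸ I) fun i => I.toCotangent (a i) := by
  rw [linearIndependent_iff']
  intro s g hg i hi
  choose c hc using fun j => Ideal.Quotient.mk_surjective (g j)
  have sum_mem_sq : ((∑ j ∈ s, c j • a j : I) : R) ∈ I ^ 2 := by
    rw [← Ideal.toCotangent_eq_zero, map_sum, ← hg]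
    refine Finset.sum_congr rfl fun j _ => ?_
    rw [map_smul, ← hc j]
    rfl
  have sum_smul_v : ∑ j ∈ s, (φ (c j)).fst • v j = 0 := by
    have h := congrArg snd (map_eq_zero_of_mem_sq_of_le_comap_kerIdeal hφ.ge sum_mem_sq)
    simpa [ha, snd_sum] using h
  have fst_eq_zero : (φ (c i)).fst = 0 := linearIndependent_iff'.mp hv s _ sum_smul_v i hi
  rw [← hc i, Ideal.Quotient.eq_zero_iff_mem, ← hφ]
  exact fst_eq_zero

theorem finrank_cotangent_eq_natCard_of_trivSqZeroExt [Nontrivial (R ⧸ I)]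
    (hspan : Ideal.span (Set.range fun i => (a i : R)) = I) (hφ : (kerIdeal K V).comap φ = I)
    (hv : LinearIndependent K v) (ha : ∀ i, φ (a i) = inr (v i)) :
    Module.finrank (R ⧸ I) I.Cotangent = Nat.card ι :=
  Module.finrank_eq_nat_card_basis <|
    .mk (linearIndependent_toCotangent_of_trivSqZeroExt hφ hv ha)
      (span_range_toCotangent_eq_top hspan).ge

end Cotangent

section Localization

variable {R ι K V : Type*} [CommRing R] [Field K] [AddCommGroup V] [Module K V] [Module Kᵐᵒᵖ V]
  [IsCentralScalar K V] {m : Ideal R} {φ : R →+* TrivSqZeroExt K V}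

theorem isUnit_map_iff_notMem_of_comap_kerIdeal_eq (hφ : (kerIdeal K V).comap φ = m) {r : R} :
    IsUnit (φ r) ↔ r ∉ m := by
  rw [isUnit_iff_isUnit_fst, isUnit_iff_ne_zero, ← hφ]
  rfl

theorem comap_kerIdeal_eq_maximalIdeal [m.IsPrime]
    {ψ : Localization.AtPrime m →+* TrivSqZeroExt K V}
    (hψ : (kerIdeal K V).comap (ψ.comp (algebraMap R _)) = m) :
    (kerIdeal K V).comap ψ = maximalIdeal (Localization.AtPrime m) := by
  refine ((maximalIdeal.isMaximal _).eq_of_le ?_ ?_).symm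
  · exact RingHom.ker_ne_top ((fstHom K K V).toRingHom.comp ψ)
  · rw [← Localization.AtPrime.map_eq_maximalIdeal, Ideal.map_le_iff_le_comap, Ideal.comap_comap,
      hψ]

theorem finrank_cotangentSpace_atPrime_eq_natCard_of_trivSqZeroExt [m.IsPrime]
    {a : ι → R} {v : ι → V} (hspan : Ideal.span (Set.range a) = m)
    (hφ : (kerIdeal K V).comap φ = m) (hv : LinearIndependent K v)
    (ha : ∀ i, φ (a i) = inr (v i)) :
    Module.finrank (ResidueField (Localization.AtPrime m))
      (CotangentSpace (Localization.AtPrime m)) = Nat.card ι := by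
  let ψ : Localization.AtPrime m →+* TrivSqZeroExt K V :=
    IsLocalization.lift (M := m.primeCompl)
      fun y => (isUnit_map_iff_notMem_of_comap_kerIdeal_eq hφ).mpr y.2
  have ψ_comp : ψ.comp (algebraMap R _) = φ := IsLocalization.lift_comp _
  have span_image : Ideal.span (Set.range fun i => algebraMap R (Localization.AtPrime m) (a i)) =
      maximalIdeal (Localization.AtPrime m) := by
    rw [Set.range_comp' (algebraMap R _) a, ← Ideal.map_span, hspan,
      Localization.AtPrime.map_eq_maximalIdeal]
  have image_mem (i : ι) : algebraMap R _ (a i) ∈ maximalIdeal (Localization.AtPrime m) :=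
    span_image ▸ Ideal.subset_span ⟨i, rfl⟩
  have : Nontrivial (Localization.AtPrime m ⧸ maximalIdeal (Localization.AtPrime m)) :=
    inferInstanceAs (Nontrivial (ResidueField _))
  exact finrank_cotangent_eq_natCard_of_trivSqZeroExt (a := fun i => ⟨_, image_mem i⟩) span_image
    (comap_kerIdeal_eq_maximalIdeal (ψ_comp ▸ hφ)) hv
    fun i => (RingHom.congr_fun ψ_comp (a i)).trans (ha i)

end Localization

section MvPolynomial

open MvPolynomial

variable {σ k : Type*}

variable (σ k) in
/-- The first-order Taylor expansion of a polynomial at the origin, as an element of the trivial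
square-zero extension of `k` by the free module on the variables: the constant term is the first
component, the linear part the second. -/
noncomputable def originJet [CommSemiring k] :
    MvPolynomial σ k →ₐ[k] TrivSqZeroExt k (σ →₀ k) :=
  aeval fun i => inr (Finsupp.single i 1)

@[simp]
theorem originJet_X [CommSemiring k] (i : σ) : originJet σ k (X i) = inr (Finsupp.single i 1) :=
  aeval_X _ i

theorem fst_originJet [CommSemiring k] (p : MvPolynomial σ k) :
    (originJet σ k p).fst = constantCoeff p := by
  have h : (fstHom k k (σ →₀ k)).comp (originJet σ k) = aeval fun _ => 0 := by ext; simp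
  exact (DFunLike.congr_fun h p).trans (aeval_zero p)

theorem comap_originJet_kerIdeal [CommSemiring k] :
    (kerIdeal k (σ →₀ k)).comap (originJet σ k) = idealOfVars σ k := by
  ext p
  rw [← pow_one (idealOfVars σ k), mem_pow_idealOfVars_iff']
  simp [kerIdeal, fst_originJet, constantCoeff_eq, Finsupp.degree_eq_zero_iff]

theorem finrank_cotangentSpace_origin_eq_natCard_of_le_sq [Field k] {I : Ideal (MvPolynomial σ k)}
    (hI : I ≤ idealOfVars σ k ^ 2) {m : Ideal (MvPolynomial σ k ⧸ I)} [m.IsPrime]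
    (hm : m = Ideal.span (Set.range fun i => Ideal.Quotient.mk I (X i))) :
    Module.finrank (ResidueField (Localization.AtPrime m))
      (CotangentSpace (Localization.AtPrime m)) = Nat.card σ := by
  let φ : MvPolynomial σ k ⧸ I →+* TrivSqZeroExt k (σ →₀ k) :=
    Ideal.Quotient.lift I (originJet σ k) fun p hp =>
      map_eq_zero_of_mem_sq_of_le_comap_kerIdeal (φ := (originJet σ k).toRingHom)
        comap_originJet_kerIdeal.ge (hI hp)
  have φ_comp : φ.comp (Ideal.Quotient.mk I) = (originJet σ k).toRingHom :=
    Ideal.Quotient.lift_comp_mk I _ _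
  have comap_φ : (kerIdeal k (σ →₀ k)).comap φ = m := by
    rw [← Ideal.map_comap_of_surjective _ Ideal.Quotient.mk_surjective (Ideal.comap φ _),
      Ideal.comap_comap, φ_comp, hm, Set.range_comp' (Ideal.Quotient.mk I) X, ← Ideal.map_span]
    exact congrArg _ comap_originJet_kerIdeal
  exact finrank_cotangentSpace_atPrime_eq_natCard_of_trivSqZeroExt hm.symm comap_φ
    (Finsupp.basisSingleOne (R := k)).linearIndependent fun i =>
      (RingHom.congr_fun φ_comp (X i)).trans (by simp)

end MvPolynomial

open MvPolynomial in
/-- At the origin of the `A_l` surface singularity `xy = t^{l+1}` (with `l ≥ 1`), the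
cotangent space `𝔪/𝔪²` of the local ring is `3`-dimensional over the residue field. -/
theorem cotangentSpace_Al_singularity_finrank_eq_three
    (k : Type*) [Field k] (l : ℕ) (hl : 1 ≤ l)
    (I : Ideal (MvPolynomial (Fin 3) k))
    (hI : I = Ideal.span {(X 0 : MvPolynomial (Fin 3) k) * X 1 - X 2 ^ (l + 1)})
    (m₀ : Ideal (MvPolynomial (Fin 3) k ⧸ I))
    (hm₀ : m₀ = Ideal.span
      {Ideal.Quotient.mk I (X 0), Ideal.Quotient.mk I (X 1), Ideal.Quotient.mk I (X 2)})
    [m₀.IsMaximal] :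
    Module.finrank (IsLocalRing.ResidueField (Localization.AtPrime m₀))
      (IsLocalRing.CotangentSpace (Localization.AtPrime m₀)) = 3 := by
  have X_mem (i : Fin 3) : X i ∈ idealOfVars (Fin 3) k := Ideal.subset_span ⟨i, rfl⟩
  have I_le_sq : I ≤ idealOfVars (Fin 3) k ^ 2 := by
    rw [hI, Ideal.span_singleton_le_iff_mem]
    refine sub_mem ?_ (Ideal.pow_le_pow_right (by lia) (Ideal.pow_mem_pow (X_mem 2) (l + 1)))
    rw [sq]
    exact Ideal.mul_mem_mul (X_mem 0) (X_mem 1)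
  have m₀_eq_span : m₀ = Ideal.span (Set.range fun i => Ideal.Quotient.mk I (X i)) := by
    rw [hm₀]
    congr 1
    ext z
    simp [Fin.exists_fin_succ, eq_comm]
  simpa using finrank_cotangentSpace_origin_eq_natCard_of_le_sq I_le_sq m₀_eq_span
end

section
/- Let k be a field and let l ≥ 1 be an integer. There is a well-defined k-algebra homomorphism φ from R = k[x, y, t]/(x·y − t^{l+1}) to R' = k[x'', y'', t]/(x''·y'' − t^{l−1}) determined by x ↦ t·x'', y ↦ t·y'', and t ↦ t (well defined because (t x'')(t y'') − t^{l+1} = t²(x'' y'' − t^{l−1})). Moreover, the induced map between the localizations of R and R' away from the image of t (that is, after inverting t on both sides) is an isomorphism of k-algebras. -/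
/-! Blowing up the origin of affine space is, in the chart of the coordinate `t`, the substitution
`x_j ↦ t x_j`, `t ↦ t`. A homomorphism out of the polynomial ring at which `t` is a unit extends
uniquely along this substitution (divide the images of the other coordinates by `t`), and this
universal property passes to the quotients by an ideal `I` and by any ideal `J` between the total
transform of `I` and its `t`-saturation. By Yoneda, the quotients agree after inverting `t`.
For the `A_l` singularity, `(t x)(t y) - t ^ (l + 1) = t ^ 2 (x y - t ^ (l - 1))`.
-/

theorem exists_algEquiv_away_of_comp_eq_algHom {k A B S T : Type*} [CommSemiring k]
    [CommSemiring A] [CommSemiring B] [CommSemiring S] [CommSemiring T]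
    [Algebra k A] [Algebra k B] [Algebra k S] [Algebra k T] [Algebra A S] [Algebra B T]
    [IsScalarTower k A S] [IsScalarTower k B T] {a : A} {b : B}
    [IsLocalization.Away a S] [IsLocalization.Away b T] (φ : A →ₐ[k] B) (hb : φ a = b)
    (ψ : B →ₐ[k] S) (hψ : ψ.comp φ = Algebra.algHom k A S)
    (hφ : ∀ f g : B →ₐ[k] T, IsUnit (f b) → f.comp φ = g.comp φ → f = g) :
    ∃ e : S ≃ₐ[k] T, ∀ r, e (algebraMap A S r) = algebraMap B T (φ r) := by
  have hψφ (r : A) : ψ (φ r) = algebraMap A S r := DFunLike.congr_fun hψ r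
  have hunitT : IsUnit (((Algebra.algHom k B T).comp φ) a) := by
    simpa only [AlgHom.comp_apply, hb] using! IsLocalization.Away.algebraMap_isUnit b
  have hunitS : IsUnit (ψ b) := by
    simpa only [← hb, hψφ] using IsLocalization.Away.algebraMap_isUnit a
  let F : S →ₐ[k] T := IsLocalization.Away.liftAlgHom a hunitT
  let G : T →ₐ[k] S := IsLocalization.Away.liftAlgHom b hunitS
  have hF (r : A) : F (algebraMap A S r) = algebraMap B T (φ r) :=
    IsLocalization.Away.lift_eq a hunitT r
  have hG (s : B) : G (algebraMap B T s) = ψ s := IsLocalization.Away.lift_eq b hunitS s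
  have hFψ : Algebra.algHom k B T = F.comp ψ :=
    hφ _ _ (IsLocalization.Away.algebraMap_isUnit b) <| AlgHom.ext fun r ↦ by
      simpa only [AlgHom.comp_apply, hψφ] using! (hF r).symm
  have hFG : F.comp G = AlgHom.id k T :=
    IsLocalization.algHom_ext (Submonoid.powers b) <| AlgHom.ext fun s ↦
      (congrArg F (hG s)).trans (DFunLike.congr_fun hFψ s).symm
  have hGF : G.comp F = AlgHom.id k S :=
    IsLocalization.algHom_ext (Submonoid.powers a) <| AlgHom.ext fun r ↦
      (congrArg G (hF r)).trans ((hG (φ r)).trans (hψφ r))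
  exact ⟨AlgEquiv.ofAlgHom F G hFG hGF, hF⟩

section Ideal

variable {A B F : Type*} [Semiring A] [CommSemiring B] [FunLike F A B]
  {φ : F} {f : A} {g c : B}

theorem span_singleton_le_comap_of_map_eq_mul [RingHomClass F A B] (h : φ f = c * g) :
    Ideal.span {f} ≤ (Ideal.span {g}).comap φ := by
  rw [Ideal.span_singleton_le_iff_mem, Ideal.mem_comap, h]
  exact Ideal.mul_mem_left _ c (Ideal.mem_span_singleton_self g)

theorem mul_mem_map_span_singleton_of_map_eq_mul (h : φ f = c * g) {p : B}
    (hp : p ∈ Ideal.span {g}) : c * p ∈ (Ideal.span {f}).map φ := by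
  obtain ⟨q, rfl⟩ := Ideal.mem_span_singleton.1 hp
  rw [← mul_assoc, ← h]
  exact Ideal.mul_mem_right q _ (Ideal.mem_map_of_mem φ (Ideal.mem_span_singleton_self f))

end Ideal

section BlowupChart

open MvPolynomial

section Polynomial

variable {σ k T : Type*} [DecidableEq σ] [CommSemiring k] [CommSemiring T] [Algebra k T]

variable (k) in
/-- The chart of the blow-up of affine space at the origin in which the exceptional divisor is
`X i = 0`, as the comorphism `X i ↦ X i`, `X j ↦ X i * X j` for `j ≠ i`. -/
noncomputable def blowupChart (i : σ) : MvPolynomial σ k →ₐ[k] MvPolynomial σ k :=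
  aeval fun j ↦ if j = i then X i else X i * X j

theorem blowupChart_X_self (i : σ) : blowupChart k i (X i) = X i := by
  simp [blowupChart]

theorem blowupChart_X_of_ne {i j : σ} (h : j ≠ i) : blowupChart k i (X j) = X i * X j := by
  simp [blowupChart, h]

theorem algHom_ext_of_comp_blowupChart {i : σ} {f g : MvPolynomial σ k →ₐ[k] T}
    (hi : IsUnit (f (X i))) (h : f.comp (blowupChart k i) = g.comp (blowupChart k i)) : f = g := by
  have hX (j : σ) : f (blowupChart k i (X j)) = g (blowupChart k i (X j)) :=
    DFunLike.congr_fun h (X j)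
  have hfg : f (X i) = g (X i) := by simpa only [blowupChart_X_self] using hX i
  refine algHom_ext fun j ↦ ?_
  obtain rfl | hj := eq_or_ne j i
  · exact hfg
  · apply hi.mul_left_cancel
    simpa only [blowupChart_X_of_ne hj, map_mul, ← hfg] using hX j

theorem exists_comp_blowupChart_eq {i : σ} {f : MvPolynomial σ k →ₐ[k] T}
    (hi : IsUnit (f (X i))) : ∃ g : MvPolynomial σ k →ₐ[k] T, g.comp (blowupChart k i) = f := by
  obtain ⟨u, hu⟩ := hi.exists_right_inv
  refine ⟨aeval fun j ↦ if j = i then f (X i) else u * f (X j), algHom_ext fun j ↦ ?_⟩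
  obtain rfl | hj := eq_or_ne j i
  · simp [blowupChart_X_self]
  · simp [blowupChart_X_of_ne hj, hj, ← mul_assoc, hu]

end Polynomial

section Quotient

variable {σ k T : Type*} [DecidableEq σ] [CommRing k] [CommSemiring T] [Algebra k T]
  {i : σ} {I J : Ideal (MvPolynomial σ k)}

theorem algHom_ext_of_comp_quotientMap_blowupChart (hIJ : I ≤ J.comap (blowupChart k i))
    {f g : (MvPolynomial σ k ⧸ J) →ₐ[k] T} (hi : IsUnit (f (Ideal.Quotient.mk J (X i))))
    (h : f.comp (Ideal.quotientMapₐ J (blowupChart k i) hIJ) =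
      g.comp (Ideal.quotientMapₐ J (blowupChart k i) hIJ)) : f = g :=
  Ideal.Quotient.algHom_ext k <| algHom_ext_of_comp_blowupChart hi <|
    congrArg (AlgHom.comp · (Ideal.Quotient.mkₐ k I)) h

theorem exists_comp_quotientMap_blowupChart_eq (hIJ : I ≤ J.comap (blowupChart k i))
    (hJI : ∀ p ∈ J, ∃ n : ℕ, X i ^ n * p ∈ I.map (blowupChart k i))
    {f : (MvPolynomial σ k ⧸ I) →ₐ[k] T} (hi : IsUnit (f (Ideal.Quotient.mk I (X i)))) :
    ∃ g : (MvPolynomial σ k ⧸ J) →ₐ[k] T,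
      g.comp (Ideal.quotientMapₐ J (blowupChart k i) hIJ) = f := by
  obtain ⟨g, hg⟩ := exists_comp_blowupChart_eq (f := f.comp (Ideal.Quotient.mkₐ k I)) hi
  have hg_chart (p : MvPolynomial σ k) :
      g (blowupChart k i p) = f (Ideal.Quotient.mk I p) := DFunLike.congr_fun hg p
  have hg_unit : IsUnit (g (X i)) := by
    simpa only [← hg_chart, blowupChart_X_self] using hi
  have hg_map : I.map (blowupChart k i) ≤ RingHom.ker g := by
    refine Ideal.map_le_iff_le_comap.2 fun p hp ↦ ?_
    rw [Ideal.mem_comap, RingHom.mem_ker, hg_chart, Ideal.Quotient.eq_zero_iff_mem.2 hp, map_zero]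
  have hg_zero (p : MvPolynomial σ k) (hp : p ∈ J) : g p = 0 := by
    obtain ⟨n, hn⟩ := hJI p hp
    have hmul : g (X i) ^ n * g p = 0 := by
      simpa only [map_mul, map_pow] using RingHom.mem_ker.1 (hg_map hn)
    exact (hg_unit.pow n).mul_right_eq_zero.1 hmul
  exact ⟨Ideal.Quotient.liftₐ J g hg_zero, Ideal.Quotient.algHom_ext k hg⟩

theorem exists_algEquiv_away_blowupChart (hIJ : I ≤ J.comap (blowupChart k i))
    (hJI : ∀ p ∈ J, ∃ n : ℕ, X i ^ n * p ∈ I.map (blowupChart k i)) :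
    ∃ e : Localization.Away (Ideal.Quotient.mk I (X i)) ≃ₐ[k]
          Localization.Away (Ideal.Quotient.mk J (X i)),
      ∀ r : MvPolynomial σ k ⧸ I,
        e (algebraMap _ _ r) =
          algebraMap _ _ (Ideal.quotientMapₐ J (blowupChart k i) hIJ r) := by
  have hi : Ideal.quotientMapₐ J (blowupChart k i) hIJ (Ideal.Quotient.mk I (X i)) =
      Ideal.Quotient.mk J (X i) := congrArg (Ideal.Quotient.mk J) (blowupChart_X_self i)
  obtain ⟨ψ, hψ⟩ := exists_comp_quotientMap_blowupChart_eq hIJ hJI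
    (f := Algebra.algHom k _ (Localization.Away (Ideal.Quotient.mk I (X i))))
    (IsLocalization.Away.algebraMap_isUnit _)
  exact exists_algEquiv_away_of_comp_eq_algHom _ hi ψ hψ fun _ _ ↦
    algHom_ext_of_comp_quotientMap_blowupChart hIJ

theorem blowupChart_mul_sub_pow {a b : σ} (ha : a ≠ i) (hb : b ≠ i) {l : ℕ} (hl : 1 ≤ l) :
    blowupChart k i (X a * X b - X i ^ (l + 1)) = X i ^ 2 * (X a * X b - X i ^ (l - 1)) := by
  obtain ⟨m, rfl⟩ := Nat.exists_eq_add_of_le' hl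
  simp only [map_sub, map_mul, map_pow, blowupChart_X_self, blowupChart_X_of_ne ha,
    blowupChart_X_of_ne hb, Nat.add_sub_cancel]
  ring

end Quotient

theorem blowup_middle_chart_iso_away_t_general
    (k : Type*) [CommRing k] (l : ℕ) (hl : 1 ≤ l)
    (I : Ideal (MvPolynomial (Fin 3) k))
    (hI : I = Ideal.span {(X 0 : MvPolynomial (Fin 3) k) * X 1 - X 2 ^ (l + 1)})
    (I' : Ideal (MvPolynomial (Fin 3) k))
    (hI' : I' = Ideal.span {(X 0 : MvPolynomial (Fin 3) k) * X 1 - X 2 ^ (l - 1)}) :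
    ∃ φ : (MvPolynomial (Fin 3) k ⧸ I) →ₐ[k] (MvPolynomial (Fin 3) k ⧸ I'),
      φ (Ideal.Quotient.mk I (X 0)) = Ideal.Quotient.mk I' (X 2) * Ideal.Quotient.mk I' (X 0) ∧
      φ (Ideal.Quotient.mk I (X 1)) = Ideal.Quotient.mk I' (X 2) * Ideal.Quotient.mk I' (X 1) ∧
      φ (Ideal.Quotient.mk I (X 2)) = Ideal.Quotient.mk I' (X 2) ∧
      ∃ e : Localization.Away (Ideal.Quotient.mk I (X 2)) ≃ₐ[k]
            Localization.Away (Ideal.Quotient.mk I' (X 2)),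
        ∀ r : MvPolynomial (Fin 3) k ⧸ I,
          e (algebraMap _ _ r) = algebraMap _ _ (φ r) := by
  subst hI hI'
  have h0 : (0 : Fin 3) ≠ 2 := by decide
  have h1 : (1 : Fin 3) ≠ 2 := by decide
  have htransform := blowupChart_mul_sub_pow (k := k) h0 h1 hl
  have hle := span_singleton_le_comap_of_map_eq_mul htransform
  exact ⟨Ideal.quotientMapₐ _ (blowupChart k 2) hle,
    congrArg (Ideal.Quotient.mk _) (blowupChart_X_of_ne h0),
    congrArg (Ideal.Quotient.mk _) (blowupChart_X_of_ne h1),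
    congrArg (Ideal.Quotient.mk _) (blowupChart_X_self 2),
    exists_algEquiv_away_blowupChart hle fun _ hp ↦
      ⟨2, mul_mem_map_span_singleton_of_map_eq_mul htransform hp⟩⟩

end BlowupChart

open MvPolynomial in
/-- There is a `k`-algebra homomorphism `φ : k[x,y,t]/(xy − t^{l+1}) →
k[x'',y'',t]/(x''y'' − t^{l−1})` with `x ↦ t·x''`, `y ↦ t·y''`, `t ↦ t`, and the induced
map between the localizations away from `t` is an isomorphism of `k`-algebras. -/
theorem blowup_middle_chart_iso_away_t
    (k : Type*) [Field k] (l : ℕ) (hl : 1 ≤ l)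
    (I : Ideal (MvPolynomial (Fin 3) k))
    (hI : I = Ideal.span {(X 0 : MvPolynomial (Fin 3) k) * X 1 - X 2 ^ (l + 1)})
    (I' : Ideal (MvPolynomial (Fin 3) k))
    (hI' : I' = Ideal.span {(X 0 : MvPolynomial (Fin 3) k) * X 1 - X 2 ^ (l - 1)}) :
    ∃ φ : (MvPolynomial (Fin 3) k ⧸ I) →ₐ[k] (MvPolynomial (Fin 3) k ⧸ I'),
      φ (Ideal.Quotient.mk I (X 0)) = Ideal.Quotient.mk I' (X 2) * Ideal.Quotient.mk I' (X 0) ∧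
      φ (Ideal.Quotient.mk I (X 1)) = Ideal.Quotient.mk I' (X 2) * Ideal.Quotient.mk I' (X 1) ∧
      φ (Ideal.Quotient.mk I (X 2)) = Ideal.Quotient.mk I' (X 2) ∧
      ∃ e : Localization.Away (Ideal.Quotient.mk I (X 2)) ≃ₐ[k]
            Localization.Away (Ideal.Quotient.mk I' (X 2)),
        ∀ r : MvPolynomial (Fin 3) k ⧸ I,
          e (algebraMap _ _ r) = algebraMap _ _ (φ r) :=
  blowup_middle_chart_iso_away_t_general k l hl I hI I' hI'
end
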